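/- Let f : ℝ² → ℝ be a real polynomial function of degree d in two variables with only finitely many critical points, whose tangency polynomial T(x,y) = x·f_y − y·f_x is not identically zero. Let (a,b) ≠ (0,0) and suppose the linear form b·x − a·y divides the degree-d homogeneous part f_d with multiplicity exactly m ≥ 1. Then there exists R₀ > 0 such that for every R ≥ R₀, the number of connected components γ of {(x,y) : T(x,y) = 0 and ‖(x,y)‖ > R} having the property that some sequence (x_n, y_n) ∈ γ satisfies ‖(x_n, y_n)‖ → ∞ and [x_n : y_n] → [a : b] in the real projective line, is at most 2(m − 1). -/

import Mathlib

open MvPolynomial Filter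

/-- Evaluation of a polynomial in two variables at the point `(x, y)`. -/
noncomputable def evalP (f : MvPolynomial (Fin 2) ℝ) (x y : ℝ) : ℝ :=
  MvPolynomial.eval ![x, y] f

/-- `p` is a critical point of `f`: both partial derivatives vanish at `p`. -/
def IsCriticalPt (f : MvPolynomial (Fin 2) ℝ) (p : ℝ × ℝ) : Prop :=
  evalP (pderiv 0 f) p.1 p.2 = 0 ∧ evalP (pderiv 1 f) p.1 p.2 = 0

/-- The Euclidean norm on `ℝ²`. -/
noncomputable def enorm2 (p : ℝ × ℝ) : ℝ := Real.sqrt (p.1 ^ 2 + p.2 ^ 2)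

/-- The tangency polynomial `T = x·f_y − y·f_x` whose zero set is the curve of
tangencies of the level sets of `f` with the circles centered at the origin. -/
noncomputable def tangencyPoly (f : MvPolynomial (Fin 2) ℝ) : MvPolynomial (Fin 2) ℝ :=
  X 0 * pderiv 1 f - X 1 * pderiv 0 f

/-- The part of the curve of tangencies of `f` lying outside the closed disk of
radius `R` centered at the origin. -/
noncomputable def tangencyFar (f : MvPolynomial (Fin 2) ℝ) (R : ℝ) : Set (ℝ × ℝ) :=
  {q : ℝ × ℝ | evalP (tangencyPoly f) q.1 q.2 = 0 ∧ R < enorm2 q}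

/-- The set of ends of the curve of tangencies of `f` beyond radius `R` which approach
the point `[a : b]` of the real line at infinity: connected components `γ` of the part
of the curve of tangencies outside the disk of radius `R` containing a sequence of
points going to infinity whose directions converge to `[a : b]` in the real projective
line. -/
def endsToward (f : MvPolynomial (Fin 2) ℝ) (R a b : ℝ) : Set (Set (ℝ × ℝ)) :=
  {γ : Set (ℝ × ℝ) |
    (∃ p ∈ tangencyFar f R, γ = connectedComponentIn (tangencyFar f R) p) ∧
    ∃ z : ℕ → ℝ × ℝ, (∀ n, z n ∈ γ) ∧
      Filter.Tendsto (fun n => enorm2 (z n)) Filter.atTop Filter.atTop ∧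
      Filter.Tendsto (fun n => (b * (z n).1 - a * (z n).2) / enorm2 (z n))
        Filter.atTop (nhds 0)}

/-!
On the circle of radius `r`, parametrised by its angle, the tangency polynomial is the derivative
of `f`, and each further derivative is again given by a polynomial, obtained by iterating the
rotation derivation `D = x ∂/∂y - y ∂/∂x`. As `D` preserves degrees, `D ^ m f` is dominated far from
the origin by `D ^ m f_d`. If the linear form `b x - a y` divides `f_d` exactly `m` times, each of
the `m` derivations uses up one factor and `D ^ m f_d` is nonzero at `(a, b)`. Hence in a thin
sector about the ray through `(a, b)`, on every large circle, Rolle's theorem leaves at most `m - 1`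
zeros of `D f`. An end along this ray stays in the sector, since no tangencies lie on the two
boundary rays far out, and so it meets every large circle there, in points of its own; there are
thus at most `m - 1` such ends, and as many along the opposite ray.
-/

section Algebra

variable {R : Type*} [CommRing R]

/-- The derivation `x ∂/∂y - y ∂/∂x` of `R[x, y]`, the infinitesimal rotation about the origin.
It is `tangencyPoly` as a derivation, over any commutative ring. -/
noncomputable def rotationDerivation (R : Type*) [CommRing R] :
    Derivation R (MvPolynomial (Fin 2) R) (MvPolynomial (Fin 2) R) :=
  (X 0 : MvPolynomial (Fin 2) R) • pderiv 1 - (X 1 : MvPolynomial (Fin 2) R) • pderiv 0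

theorem tangencyPoly_eq_rotationDerivation (f : MvPolynomial (Fin 2) ℝ) :
    tangencyPoly f = rotationDerivation ℝ f := rfl

theorem rotationDerivation_X_zero : rotationDerivation R (X 0) = -X 1 := by
  simp [rotationDerivation, pderiv_X]

theorem rotationDerivation_X_one : rotationDerivation R (X 1) = X 0 := by
  simp [rotationDerivation, pderiv_X]

theorem isHomogeneous_rotationDerivation {p : MvPolynomial (Fin 2) R} {n : ℕ}
    (hp : p.IsHomogeneous n) : (rotationDerivation R p).IsHomogeneous n := by
  rcases n with _ | n
  · rw [← totalDegree_zero_iff_isHomogeneous, totalDegree_eq_zero_iff_eq_C] at hp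
    rw [hp, ← algebraMap_eq, Derivation.map_algebraMap]
    exact isHomogeneous_zero ..
  · have hX (i j : Fin 2) : (X i * pderiv j p).IsHomogeneous (n + 1) := by
      simpa [add_comm] using (isHomogeneous_X R i).mul (hp.pderiv (i := j))
    exact (hX 0 1).sub (hX 1 0)

theorem homogeneousComponent_rotationDerivation (d : ℕ) (p : MvPolynomial (Fin 2) R) :
    homogeneousComponent d (rotationDerivation R p) =
      rotationDerivation R (homogeneousComponent d p) := by
  have on_component (k : ℕ) :
      homogeneousComponent d (rotationDerivation R (homogeneousComponent k p)) =
        rotationDerivation R (homogeneousComponent d (homogeneousComponent k p)) := by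
    have hk : (homogeneousComponent k p).IsHomogeneous k := homogeneousComponent_isHomogeneous k p
    rw [homogeneousComponent_of_mem hk,
      homogeneousComponent_of_mem (isHomogeneous_rotationDerivation hk)]
    split_ifs <;> simp
  rw [← sum_homogeneousComponent p]
  simp only [map_sum, on_component]

theorem totalDegree_rotationDerivation_le (p : MvPolynomial (Fin 2) R) :
    (rotationDerivation R p).totalDegree ≤ p.totalDegree := by
  conv_lhs => rw [← sum_homogeneousComponent p, map_sum]
  refine totalDegree_finsetSum_le fun k hk => ?_
  exact (isHomogeneous_rotationDerivation
    (homogeneousComponent_isHomogeneous k p)).totalDegree_le.trans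
      (Finset.mem_range_succ_iff.1 hk)

theorem isHomogeneous_iterate_rotationDerivation {p : MvPolynomial (Fin 2) R} {n : ℕ}
    (hp : p.IsHomogeneous n) (j : ℕ) : ((rotationDerivation R)^[j] p).IsHomogeneous n :=
  Function.Iterate.rec (fun q : MvPolynomial (Fin 2) R => q.IsHomogeneous n)
    hp (fun _ => isHomogeneous_rotationDerivation) j

theorem homogeneousComponent_iterate_rotationDerivation (d j : ℕ) (p : MvPolynomial (Fin 2) R) :
    homogeneousComponent d ((rotationDerivation R)^[j] p) =
      (rotationDerivation R)^[j] (homogeneousComponent d p) :=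
  Function.Semiconj.iterate_right (homogeneousComponent_rotationDerivation d) j p

theorem totalDegree_iterate_rotationDerivation_le (p : MvPolynomial (Fin 2) R) (j : ℕ) :
    ((rotationDerivation R)^[j] p).totalDegree ≤ p.totalDegree :=
  Function.Iterate.rec (fun q : MvPolynomial (Fin 2) R => q.totalDegree ≤ p.totalDegree)
    le_rfl (fun q hq => (totalDegree_rotationDerivation_le q).trans hq) j

theorem eval_smul_of_isHomogeneous {S σ : Type*} [CommSemiring S] {p : MvPolynomial σ S} {n : ℕ}
    (hp : p.IsHomogeneous n) (c : S) (v : σ → S) : eval (c • v) p = c ^ n * eval v p := by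
  simp only [eval_eq, Pi.smul_apply, smul_eq_mul, mul_pow, Finset.prod_mul_distrib,
    Finset.prod_pow_eq_pow_sum, Finset.mul_sum]
  refine Finset.sum_congr rfl fun s hs => ?_
  rw [hp.degree_eq_sum_deg_support hs]
  ring

/-- Each derivation has to hit a different one of the `m` factors `L`, as otherwise a factor `L`
survives and is killed by `φ`. -/
theorem map_iterate_derivation_pow_mul {A B : Type*} [CommRing A] [Algebra R A] [CommRing B]
    (D : Derivation R A A) (φ : A →+* B) {L : A} (hL : φ L = 0) (m : ℕ) (g : A) :
    φ (D^[m] (L ^ m * g)) = m.factorial * φ (D L) ^ m * φ g := by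
  induction m generalizing g with
  | zero => simp
  | succ m ih =>
    have hD : D (L ^ (m + 1) * g) = L ^ m * (L * D g + (m + 1) * D L * g) := by
      simp only [Derivation.leibniz, Derivation.leibniz_pow, smul_eq_mul, nsmul_eq_mul,
        add_tsub_cancel_right]
      push_cast
      ring
    rw [Function.iterate_succ_apply, hD, ih, Nat.factorial_succ]
    simp only [map_add, map_mul, hL, map_natCast, map_one]
    push_cast
    ring

theorem linearForm_dvd_of_eval_smul_eq_zero [IsDomain R] [Infinite R] {a b : R}
    (hab : IsCoprime a b) {p : MvPolynomial (Fin 2) R}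
    (hp : ∀ t : R, t ≠ 0 → eval (t • ![a, b]) p = 0) : C b * X 0 - C a * X 1 ∣ p := by
  obtain ⟨u, v, huv⟩ := hab
  set L : MvPolynomial (Fin 2) R := C b * X 0 - C a * X 1
  let ℓ : MvPolynomial (Fin 2) R := C u * X 0 + C v * X 1
  let restriction : Polynomial R := aeval (fun i => Polynomial.C (![a, b] i) * Polynomial.X) p
  have restriction_eq_zero : restriction = 0 := by
    refine Polynomial.eq_zero_of_infinite_isRoot _
      ((Set.finite_singleton (0 : R)).infinite_compl.mono fun t ht => ?_)
    refine Eq.trans ?_ (hp t ht)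
    rw [← Polynomial.coe_aeval_eq_eval, comp_aeval_apply, ← aeval_eq_eval]
    congr! 3 with i
    rw [map_mul, Polynomial.aeval_C, Polynomial.aeval_X, Algebra.algebraMap_self_apply,
      Pi.smul_apply, smul_eq_mul, mul_comm]
  let π := Ideal.Quotient.mkₐ R (Ideal.span {L})
  have π_X (i : Fin 2) : π (X i) = π (C (![a, b] i) * ℓ) := by
    have hC : (C u * C a + C v * C b : MvPolynomial (Fin 2) R) = 1 := by
      rw [← C_mul, ← C_mul, ← C_add, huv, C_1]
    rw [Ideal.Quotient.mkₐ_eq_mk, Ideal.Quotient.mk_eq_mk_iff_sub_mem, Ideal.mem_span_singleton]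
    fin_cases i
    · exact ⟨C v, by
        simp only [Fin.zero_eta, Matrix.cons_val_zero, L, ℓ]
        linear_combination (-X 0) * hC⟩
    · exact ⟨-C u, by
        simp only [Fin.mk_one, Matrix.cons_val_one, Matrix.cons_val_fin_one, L, ℓ]
        linear_combination (-X 1) * hC⟩
  rw [← Ideal.mem_span_singleton, ← Ideal.Quotient.eq_zero_iff_mem, ← Ideal.Quotient.mkₐ_eq_mk R]
  calc π p = aeval (fun i => π (X i)) p := by rw [← comp_aeval_apply, aeval_X_left_apply]
    _ = π (Polynomial.aeval ℓ restriction) := by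
      simp only [restriction, π_X, comp_aeval_apply]
      simp
    _ = 0 := by rw [restriction_eq_zero, map_zero, map_zero]

theorem eval_iterate_rotationDerivation_ne_zero {K : Type*} [Field K] [CharZero K]
    {p : MvPolynomial (Fin 2) K} {d : ℕ} (hp : p.IsHomogeneous d) {a b : K}
    (hab : a ^ 2 + b ^ 2 ≠ 0) {m : ℕ} (hdvd : (C b * X 0 - C a * X 1) ^ m ∣ p)
    (hndvd : ¬ (C b * X 0 - C a * X 1) ^ (m + 1) ∣ p) :
    eval ![a, b] ((rotationDerivation K)^[m] p) ≠ 0 := by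
  obtain ⟨g, rfl⟩ := hdvd
  intro hzero
  have hcop : IsCoprime a b := by
    refine ⟨a / (a ^ 2 + b ^ 2), b / (a ^ 2 + b ^ 2), ?_⟩
    field_simp
  refine hndvd ?_
  rw [pow_succ]
  refine mul_dvd_mul_left _ (linearForm_dvd_of_eval_smul_eq_zero hcop fun t ht => ?_)
  have eval_L : eval (t • ![a, b]) (C b * X 0 - C a * X 1) = 0 := by
    simp only [Matrix.smul_cons, smul_eq_mul, Matrix.smul_empty, map_sub, map_mul, eval_C, eval_X,
      Matrix.cons_val_zero, Matrix.cons_val_one, Matrix.cons_val_fin_one]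
    ring
  have eval_DL : eval (t • ![a, b]) (rotationDerivation K (C b * X 0 - C a * X 1)) =
      -(t * (a ^ 2 + b ^ 2)) := by
    have D_L : rotationDerivation K (C b * X 0 - C a * X 1) = -(C b * X 1) - C a * X 0 := by
      simp [rotationDerivation_X_zero, rotationDerivation_X_one]
    simp only [D_L, Matrix.smul_cons, smul_eq_mul, Matrix.smul_empty, map_sub, map_neg, map_mul,
      eval_C, eval_X, Matrix.cons_val_zero, Matrix.cons_val_one, Matrix.cons_val_fin_one]
    ring
  have eval_iterate := map_iterate_derivation_pow_mul (rotationDerivation K) _ eval_L m g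
  rw [eval_smul_of_isHomogeneous (isHomogeneous_iterate_rotationDerivation hp m), hzero, mul_zero,
    eval_DL] at eval_iterate
  refine (mul_eq_zero.1 eval_iterate.symm).resolve_left ?_
  exact mul_ne_zero (Nat.cast_ne_zero.2 m.factorial_ne_zero)
    (pow_ne_zero _ (neg_ne_zero.2 (mul_ne_zero ht hab)))

end Algebra

section Asymptotics

open Topology

theorem tendsto_eval_smul_div_pow {σ : Type*} {p : MvPolynomial σ ℝ} {d : ℕ}
    (hp : p.totalDegree ≤ d) (v : σ → ℝ) :
    Tendsto (fun q : ℝ × (σ → ℝ) => eval (q.1 • q.2) p / q.1 ^ d) (atTop ×ˢ 𝓝 v)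
      (𝓝 (eval v (homogeneousComponent d p))) := by
  let dehomogenized (q : ℝ × (σ → ℝ)) : ℝ :=
    ∑ k ∈ Finset.range (d + 1), q.1 ^ (d - k) * eval q.2 (homogeneousComponent k p)
  have continuous_dehomogenized : Continuous dehomogenized :=
    continuous_finsetSum _ fun k _ =>
      (continuous_fst.pow _).mul ((continuous_eval _).comp continuous_snd)
  have dehomogenized_zero : dehomogenized (0, v) = eval v (homogeneousComponent d p) := by
    refine (Finset.sum_eq_single d (fun k hk hkd => ?_) (by simp)).trans (by simp)
    have hk_le := Finset.mem_range_succ_iff.1 hk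
    have hk_pos : d - k ≠ 0 := by omega
    simp [hk_pos]
  have p_eq_sum : p = ∑ k ∈ Finset.range (d + 1), homogeneousComponent k p := by
    conv_lhs => rw [← sum_homogeneousComponent p]
    refine Finset.sum_subset (Finset.range_mono (by omega)) fun k _ hk => ?_
    exact homogeneousComponent_eq_zero k p (by simpa using hk)
  have inv_tendsto : Tendsto (fun q : ℝ × (σ → ℝ) => (q.1⁻¹, q.2)) (atTop ×ˢ 𝓝 v) (𝓝 (0, v)) :=
    nhds_prod_eq (x := (0 : ℝ)) (y := v) ▸ tendsto_inv_atTop_zero.prodMap tendsto_id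
  rw [← dehomogenized_zero]
  refine ((continuous_dehomogenized.tendsto _).comp inv_tendsto).congr' ?_
  filter_upwards [tendsto_fst.eventually (eventually_ne_atTop 0)] with q hq
  conv_rhs => rw [p_eq_sum, map_sum, Finset.sum_div]
  refine Finset.sum_congr rfl fun k hk => ?_
  rw [eval_smul_of_isHomogeneous (homogeneousComponent_isHomogeneous k p), inv_pow,
    pow_sub₀ _ hq (Finset.mem_range_succ_iff.1 hk)]
  field_simp

theorem evalP_mul_mul (f : MvPolynomial (Fin 2) ℝ) (r x y : ℝ) :
    evalP f (r * x) (r * y) = eval (r • ![x, y]) f := by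
  simp [evalP]

theorem evalP_ne_zero_of_evalP_mul_ne_zero {p : MvPolynomial (Fin 2) ℝ} {n : ℕ}
    (hp : p.IsHomogeneous n) {r x y : ℝ} (h : evalP p (r * x) (r * y) ≠ 0) : evalP p x y ≠ 0 := by
  rw [evalP_mul_mul, eval_smul_of_isHomogeneous hp] at h
  exact right_ne_zero_of_mul h

theorem continuous_cos_sin : Continuous fun s : ℝ => ![Real.cos s, Real.sin s] :=
  continuous_pi (Fin.forall_fin_two.2 ⟨Real.continuous_cos, Real.continuous_sin⟩)

theorem eventually_evalP_circle_ne_zero {p : MvPolynomial (Fin 2) ℝ} {d : ℕ}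
    (hp : p.totalDegree ≤ d) {θ : ℝ}
    (hθ : evalP (homogeneousComponent d p) (Real.cos θ) (Real.sin θ) ≠ 0) :
    ∀ᶠ q : ℝ × ℝ in atTop ×ˢ 𝓝 θ, evalP p (q.1 * Real.cos q.2) (q.1 * Real.sin q.2) ≠ 0 := by
  have along_circles := (tendsto_eval_smul_div_pow hp ![Real.cos θ, Real.sin θ]).comp
    (tendsto_id.prodMap (continuous_cos_sin.tendsto θ))
  filter_upwards [along_circles.eventually_ne hθ] with q hq
  rw [evalP_mul_mul]
  exact (div_ne_zero_iff.1 hq).1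

end Asymptotics

section Rolle

open Topology

theorem encard_le_of_forall_finset_card_le {α : Type*} {S : Set α} {k : ℕ∞}
    (h : ∀ F : Finset α, ↑F ⊆ S → (F.card : ℕ∞) ≤ k) : S.encard ≤ k := by
  refine ENat.forall_natCast_le_iff_le.1 fun n hn => ?_
  obtain ⟨T, hTS, hT⟩ := Set.exists_subset_encard_eq hn
  lift T to Finset α using Set.finite_of_encard_eq_coe hT
  rw [← hT, Set.encard_coe_eq_coe_finsetCard]
  exact h T hTS

theorem encard_zeros_le_encard_deriv_zeros_add_one {I : Set ℝ} (hI : I.OrdConnected)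
    {g g' : ℝ → ℝ} (hg : ∀ s ∈ I, HasDerivAt g (g' s) s) :
    {s ∈ I | g s = 0}.encard ≤ {s ∈ I | g' s = 0}.encard + 1 := by
  rcases {s ∈ I | g' s = 0}.finite_or_infinite with hfin | hinf
  · refine encard_le_of_forall_finset_card_le fun Z hZ => ?_
    rw [hfin.encard_eq_coe_toFinset_card]
    norm_cast
    refine Finset.card_le_of_interleaved fun x hx y hy hxy _ => ?_
    have hxyI : Set.Icc x y ⊆ I := hI.out (hZ hx).1 (hZ hy).1
    obtain ⟨c, hc, hgc⟩ := exists_hasDerivAt_eq_zero hxy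
      (fun s hs => (hg s (hxyI hs)).continuousAt.continuousWithinAt)
      ((hZ hx).2.trans (hZ hy).2.symm) (fun s hs => hg s (hxyI (Set.Ioo_subset_Icc_self hs)))
    exact ⟨c, hfin.mem_toFinset.2 ⟨hxyI (Set.Ioo_subset_Icc_self hc), hgc⟩, hc⟩
  · simp [hinf.encard_eq]

theorem encard_zeros_le_of_iterated_deriv_ne_zero {I : Set ℝ} (hI : I.OrdConnected) {n : ℕ}
    {g : ℕ → ℝ → ℝ} (hg : ∀ j, ∀ s ∈ I, HasDerivAt (g j) (g (j + 1) s) s)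
    (hn : ∀ s ∈ I, g n s ≠ 0) : {s ∈ I | g 0 s = 0}.encard ≤ n := by
  induction n generalizing g with
  | zero =>
    simpa [Set.encard_eq_zero, Set.eq_empty_iff_forall_notMem] using hn
  | succ n ih =>
    refine (encard_zeros_le_encard_deriv_zeros_add_one hI (hg 0)).trans ?_
    push_cast
    gcongr
    exact ih (g := fun j => g (j + 1)) (fun j => hg (j + 1)) hn

theorem hasDerivAt_evalP_circle (f : MvPolynomial (Fin 2) ℝ) (r s : ℝ) :
    HasDerivAt (fun s => evalP f (r * Real.cos s) (r * Real.sin s))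
      (evalP (rotationDerivation ℝ f) (r * Real.cos s) (r * Real.sin s)) s := by
  simp only [evalP]
  induction f using MvPolynomial.induction_on with
  | C c => simpa using hasDerivAt_const s c
  | add p q hp hq =>
    simp only [map_add]
    exact hp.add hq
  | mul_X p i hp =>
    have hX : HasDerivAt (fun s => eval ![r * Real.cos s, r * Real.sin s] (X i))
        (eval ![r * Real.cos s, r * Real.sin s] (rotationDerivation ℝ (X i))) s := by
      fin_cases i
      · simpa [rotationDerivation_X_zero] using (Real.hasDerivAt_cos s).const_mul r
      · simpa [rotationDerivation_X_one] using (Real.hasDerivAt_sin s).const_mul r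
    simp only [map_mul, Derivation.leibniz, map_add, smul_eq_mul]
    exact (hp.mul hX).congr_deriv (by ring)

theorem encard_circle_zeros_le {p : MvPolynomial (Fin 2) ℝ} {r : ℝ} {n : ℕ} {I : Set ℝ}
    (hI : I.OrdConnected)
    (hn : ∀ s ∈ I, evalP ((rotationDerivation ℝ)^[n] p) (r * Real.cos s) (r * Real.sin s) ≠ 0) :
    {s ∈ I | evalP p (r * Real.cos s) (r * Real.sin s) = 0}.encard ≤ n :=
  encard_zeros_le_of_iterated_deriv_ne_zero hI
    (g := fun j s => evalP ((rotationDerivation ℝ)^[j] p) (r * Real.cos s) (r * Real.sin s))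
    (fun j s _ => by
      simpa only [Function.iterate_succ_apply'] using hasDerivAt_evalP_circle _ r s) hn

theorem eventually_nhdsNE_evalP_cos_sin_ne_zero {p : MvPolynomial (Fin 2) ℝ} {n : ℕ} {θ : ℝ}
    (hn : evalP ((rotationDerivation ℝ)^[n] p) (Real.cos θ) (Real.sin θ) ≠ 0) :
    ∀ᶠ s in 𝓝[≠] θ, evalP p (Real.cos s) (Real.sin s) ≠ 0 := by
  have hnear := ((continuous_eval ((rotationDerivation ℝ)^[n] p)).comp
    continuous_cos_sin).continuousAt.eventually_ne hn
  obtain ⟨δ, hδ, hball⟩ := Metric.eventually_nhds_iff_ball.1 hnear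
  let zeros := {s ∈ Metric.ball θ δ | evalP p (Real.cos s) (Real.sin s) = 0}
  have zeros_finite : zeros.Finite := by
    refine Set.finite_of_encard_le_coe (k := n) ?_
    simpa only [one_mul] using encard_circle_zeros_le (r := 1) (p := p)
      (convex_ball θ δ).ordConnected fun s hs => by
        rw [one_mul, one_mul]
        exact hball s hs
  have away_from_zeros : ∀ᶠ s in 𝓝[≠] θ, s ∉ zeros \ {θ} :=
    nhdsWithin_le_nhds ((zeros_finite.sdiff).isClosed.compl_mem_nhds fun h => h.2 rfl)
  filter_upwards [away_from_zeros, nhdsWithin_le_nhds (Metric.ball_mem_nhds θ hδ),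
    self_mem_nhdsWithin] with s hs hsball hsθ hps
  exact hs ⟨⟨hsball, hps⟩, hsθ⟩

end Rolle

section Sectors

open Real

/-- The open sector of half-angle `ε` about the ray from the origin in direction `θ`, for
`0 < ε < π`. The strict inequality excludes the origin. -/
def openSector (θ ε : ℝ) : Set (ℝ × ℝ) :=
  {z | cos ε * enorm2 z < z.1 * cos θ + z.2 * sin θ}

theorem continuous_enorm2 : Continuous enorm2 :=
  ((continuous_fst.pow 2).add (continuous_snd.pow 2)).sqrt

theorem enorm2_nonneg (z : ℝ × ℝ) : 0 ≤ enorm2 z := sqrt_nonneg _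

theorem enorm2_sq (z : ℝ × ℝ) : enorm2 z ^ 2 = z.1 ^ 2 + z.2 ^ 2 := sq_sqrt (by positivity)

theorem rotation_sq_add_sq (z : ℝ × ℝ) (θ : ℝ) :
    (z.1 * cos θ + z.2 * sin θ) ^ 2 + (z.1 * sin θ - z.2 * cos θ) ^ 2 = enorm2 z ^ 2 := by
  rw [enorm2_sq]
  linear_combination (z.1 ^ 2 + z.2 ^ 2) * sin_sq_add_cos_sq θ

theorem tendsto_abs_inner_div_enorm2 {ι : Type*} {l : Filter ι} {z : ι → ℝ × ℝ} {θ : ℝ}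
    (hz : ∀ᶠ i in l, 0 < enorm2 (z i))
    (hlim : Tendsto (fun i => ((z i).1 * sin θ - (z i).2 * cos θ) / enorm2 (z i)) l (nhds 0)) :
    Tendsto (fun i => |(z i).1 * cos θ + (z i).2 * sin θ| / enorm2 (z i)) l (nhds 1) := by
  have sqrt_lim : Tendsto
      (fun i => √(1 - (((z i).1 * sin θ - (z i).2 * cos θ) / enorm2 (z i)) ^ 2)) l (nhds 1) := by
    simpa using ((hlim.pow 2).const_sub 1).sqrt
  refine sqrt_lim.congr' ?_
  filter_upwards [hz] with i hi
  have sq_eq : 1 - (((z i).1 * sin θ - (z i).2 * cos θ) / enorm2 (z i)) ^ 2 =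
      (((z i).1 * cos θ + (z i).2 * sin θ) / enorm2 (z i)) ^ 2 := by
    field_simp
    linear_combination -rotation_sq_add_sq (z i) θ
  rw [sq_eq, sqrt_sq_eq_abs, abs_div, abs_of_pos hi]

theorem exists_polar_angle (z : ℝ × ℝ) (θ : ℝ) :
    ∃ s, |s - θ| ≤ π ∧ z = (enorm2 z * cos s, enorm2 z * sin s) := by
  let w : ℂ := ⟨z.1, z.2⟩
  have norm_w : ‖w‖ = enorm2 z := by
    rw [Complex.norm_def, Complex.normSq_apply, ← sq, ← sq, enorm2]
  obtain ⟨hlo, hhi⟩ := toIocMod_mem_Ioc two_pi_pos (θ - π) w.arg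
  refine ⟨toIocMod two_pi_pos (θ - π) w.arg, abs_le.2 ⟨by linarith, by linarith⟩, ?_⟩
  rw [← self_sub_toIocDiv_zsmul, zsmul_eq_mul, cos_sub_int_mul_two_pi, sin_sub_int_mul_two_pi,
    ← norm_w, Complex.norm_mul_cos_arg, Complex.norm_mul_sin_arg]

theorem exists_polar_angle_of_mem_openSector {θ ε : ℝ} (hε : 0 ≤ ε) {z : ℝ × ℝ}
    (hz : z ∈ openSector θ ε) :
    ∃ s ∈ Set.Ioo (θ - ε) (θ + ε), z = (enorm2 z * cos s, enorm2 z * sin s) := by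
  obtain ⟨s, hs, hzs⟩ := exists_polar_angle z θ
  suffices |s - θ| < ε by
    rw [abs_lt] at this
    exact ⟨s, ⟨by linarith, by linarith⟩, hzs⟩
  by_contra! hle
  have cos_le : cos (s - θ) ≤ cos ε :=
    cos_abs (s - θ) ▸ cos_le_cos_of_nonneg_of_le_pi hε hs hle
  refine not_le_of_gt (Set.mem_ofPred.1 hz) ?_
  calc z.1 * cos θ + z.2 * sin θ
      = enorm2 z * cos (s - θ) := by
        rw [congrArg Prod.fst hzs, congrArg Prod.snd hzs, cos_sub]
        ring
    _ ≤ cos ε * enorm2 z := by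
        rw [mul_comm]
        exact mul_le_mul_of_nonneg_right cos_le (enorm2_nonneg z)

theorem eq_polar_of_inner_eq {θ ε : ℝ} {z : ℝ × ℝ}
    (hz : z.1 * cos θ + z.2 * sin θ = cos ε * enorm2 z) :
    z = (enorm2 z * cos (θ + ε), enorm2 z * sin (θ + ε)) ∨
      z = (enorm2 z * cos (θ - ε), enorm2 z * sin (θ - ε)) := by
  have sq_eq : (z.1 * sin θ - z.2 * cos θ) ^ 2 = (enorm2 z * sin ε) ^ 2 := by
    linear_combination rotation_sq_add_sq z θ - enorm2 z ^ 2 * sin_sq_add_cos_sq ε -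
      (z.1 * cos θ + z.2 * sin θ + cos ε * enorm2 z) * hz
  have hθ := sin_sq_add_cos_sq θ
  simp only [cos_add, sin_add, cos_sub, sin_sub]
  rcases sq_eq_sq_iff_eq_or_eq_neg.1 sq_eq with h | h
  · right
    ext
    · linear_combination cos θ * hz + sin θ * h - z.1 * hθ
    · linear_combination sin θ * hz - cos θ * h - z.2 * hθ
  · left
    ext
    · linear_combination cos θ * hz + sin θ * h - z.1 * hθ
    · linear_combination sin θ * hz - cos θ * h - z.2 * hθ

theorem subset_openSector_of_isPreconnected {γ : Set (ℝ × ℝ)} (hγ : IsPreconnected γ) {θ ε : ℝ}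
    (hmeets : (γ ∩ openSector θ ε).Nonempty)
    (hboundary : ∀ z ∈ γ, z.1 * cos θ + z.2 * sin θ ≠ cos ε * enorm2 z) :
    γ ⊆ openSector θ ε := by
  obtain ⟨z, hzγ, hz⟩ := hmeets
  intro w hw
  by_contra hw'
  obtain ⟨x, hx, hx'⟩ := hγ.intermediate_value₂ hw hzγ
    (f := fun z => z.1 * cos θ + z.2 * sin θ) (g := fun z => cos ε * enorm2 z)
    (by fun_prop) (continuous_const.mul continuous_enorm2).continuousOn (not_lt.1 hw') hz.le
  exact hboundary x hx hx'

end Sectors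

section Ends

open Real Topology

/-- The ends of the curve of tangencies of `f` beyond radius `R` which approach the point at
infinity of the ray in direction `θ`, refining `endsToward` from lines to rays. Instead of a
sequence, the end is required to have arbitrarily distant points in every sector about the ray. -/
def endsAlong (f : MvPolynomial (Fin 2) ℝ) (R θ : ℝ) : Set (Set (ℝ × ℝ)) :=
  {γ | (∃ p ∈ tangencyFar f R, γ = connectedComponentIn (tangencyFar f R) p) ∧
    ∀ ε ∈ Set.Ioo 0 π, ∀ M, ∃ z ∈ γ ∩ openSector θ ε, M < enorm2 z}

theorem subset_tangencyFar_of_mem_endsAlong {f : MvPolynomial (Fin 2) ℝ} {R θ : ℝ}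
    {γ : Set (ℝ × ℝ)} (hγ : γ ∈ endsAlong f R θ) : γ ⊆ tangencyFar f R := by
  obtain ⟨⟨p, -, rfl⟩, -⟩ := hγ
  exact connectedComponentIn_subset _ p

theorem isPreconnected_of_mem_endsAlong {f : MvPolynomial (Fin 2) ℝ} {R θ : ℝ}
    {γ : Set (ℝ × ℝ)} (hγ : γ ∈ endsAlong f R θ) : IsPreconnected γ := by
  obtain ⟨⟨p, -, rfl⟩, -⟩ := hγ
  exact isPreconnected_connectedComponentIn

theorem eq_connectedComponentIn_of_mem_endsAlong {f : MvPolynomial (Fin 2) ℝ} {R θ : ℝ}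
    {γ : Set (ℝ × ℝ)} (hγ : γ ∈ endsAlong f R θ) {z : ℝ × ℝ} (hz : z ∈ γ) :
    γ = connectedComponentIn (tangencyFar f R) z := by
  obtain ⟨⟨p, -, rfl⟩, -⟩ := hγ
  exact connectedComponentIn_eq hz

theorem endsToward_subset (f : MvPolynomial (Fin 2) ℝ) (R θ : ℝ) {N : ℝ} (hN : N ≠ 0) :
    endsToward f R (N * cos θ) (N * sin θ) ⊆ endsAlong f R θ ∪ endsAlong f R (θ + π) := by
  rintro γ ⟨hγ, z, hzγ, hinfty, hlim⟩
  let u (n : ℕ) := (z n).1 * cos θ + (z n).2 * sin θ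
  let v (n : ℕ) := (z n).1 * sin θ - (z n).2 * cos θ
  have v_lim : Tendsto (fun n => v n / enorm2 (z n)) atTop (𝓝 0) := by
    convert hlim.const_mul N⁻¹ using 2 with n
    · simp only [v]
      field_simp
    · rw [mul_zero]
  have u_lim : Tendsto (fun n => |u n| / enorm2 (z n)) atTop (𝓝 1) :=
    tendsto_abs_inner_div_enorm2 (hinfty.eventually_gt_atTop 0) v_lim
  have eventually_near {ε : ℝ} (hε : ε ∈ Set.Ioo 0 π) (M : ℝ) :
      ∀ᶠ n in atTop, M < enorm2 (z n) ∧ cos ε * enorm2 (z n) < |u n| := by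
    have cos_lt_one : cos ε < 1 := cos_zero ▸ cos_lt_cos_of_nonneg_of_le_pi le_rfl hε.2.le hε.1
    filter_upwards [hinfty.eventually_gt_atTop 0, hinfty.eventually_gt_atTop M,
      u_lim.eventually_const_lt cos_lt_one] with n hpos hM hn
    exact ⟨hM, (lt_div_iff₀ hpos).1 hn⟩
  rcases frequently_or_distrib.1 (Frequently.of_forall (f := atTop) fun n => le_total 0 (u n))
    with hside | hside
  · refine Or.inl ⟨hγ, fun ε hε M => ?_⟩
    obtain ⟨n, hn, hM, hu⟩ := (hside.and_eventually (eventually_near hε M)).exists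
    rw [abs_of_nonneg hn] at hu
    exact ⟨z n, ⟨hzγ n, hu⟩, hM⟩
  · refine Or.inr ⟨hγ, fun ε hε M => ?_⟩
    obtain ⟨n, hn, hM, hu⟩ := (hside.and_eventually (eventually_near hε M)).exists
    refine ⟨z n, ⟨hzγ n, ?_⟩, hM⟩
    rw [abs_of_nonpos hn] at hu
    refine hu.trans_eq ?_
    simp only [u, cos_add_pi, sin_add_pi]
    ring

theorem eventually_exists_eq_of_isPreconnected {X : Type*} [TopologicalSpace X] {γ : Set X}
    (hγ : IsPreconnected γ) {φ : X → ℝ} (hφ : ContinuousOn φ γ)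
    (hunbounded : ∀ M, ∃ z ∈ γ, M < φ z) : ∀ᶠ r in atTop, ∃ z ∈ γ, φ z = r := by
  obtain ⟨z₀, hz₀, -⟩ := hunbounded 0
  filter_upwards [eventually_ge_atTop (φ z₀)] with r hr
  obtain ⟨z₁, hz₁, hr'⟩ := hunbounded r
  exact hγ.intermediate_value hz₀ hz₁ hφ ⟨hr, hr'.le⟩

theorem subset_openSector_of_mem_endsAlong {f : MvPolynomial (Fin 2) ℝ} {R θ ε : ℝ}
    (hε : ε ∈ Set.Ioo 0 π)
    (hleft : ∀ r > R, evalP (tangencyPoly f) (r * cos (θ - ε)) (r * sin (θ - ε)) ≠ 0)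
    (hright : ∀ r > R, evalP (tangencyPoly f) (r * cos (θ + ε)) (r * sin (θ + ε)) ≠ 0)
    {γ : Set (ℝ × ℝ)} (hγ : γ ∈ endsAlong f R θ) : γ ⊆ openSector θ ε := by
  obtain ⟨z, hz, -⟩ := hγ.2 ε hε 0
  refine subset_openSector_of_isPreconnected (isPreconnected_of_mem_endsAlong hγ) ⟨z, hz⟩
    fun w hw hboundary => ?_
  obtain ⟨hTw, hRw⟩ := subset_tangencyFar_of_mem_endsAlong hγ hw
  rcases eq_polar_of_inner_eq hboundary with h | h
  · exact hright _ hRw (by rwa [congrArg Prod.fst h, congrArg Prod.snd h] at hTw)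
  · exact hleft _ hRw (by rwa [congrArg Prod.fst h, congrArg Prod.snd h] at hTw)

theorem encard_endsAlong_le {f : MvPolynomial (Fin 2) ℝ} {R θ ε : ℝ} {n : ℕ}
    (hε : ε ∈ Set.Ioo 0 π)
    (hleft : ∀ r > R, evalP (tangencyPoly f) (r * cos (θ - ε)) (r * sin (θ - ε)) ≠ 0)
    (hright : ∀ r > R, evalP (tangencyPoly f) (r * cos (θ + ε)) (r * sin (θ + ε)) ≠ 0)
    (hzeros : ∀ r > R, {s ∈ Set.Ioo (θ - ε) (θ + ε) |
      evalP (tangencyPoly f) (r * cos s) (r * sin s) = 0}.encard ≤ n) :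
    (endsAlong f R θ).encard ≤ n := by
  refine encard_le_of_forall_finset_card_le fun F hF => ?_
  have meets_circle : ∀ γ ∈ F, ∀ᶠ r in atTop, ∃ z ∈ γ, enorm2 z = r := fun γ hγ => by
    refine eventually_exists_eq_of_isPreconnected (isPreconnected_of_mem_endsAlong (hF hγ))
      continuous_enorm2.continuousOn fun M => ?_
    obtain ⟨z, hz, hM⟩ := (hF hγ).2 ε hε M
    exact ⟨z, hz.1, hM⟩
  obtain ⟨r, hmeets, hr⟩ :=
    (((eventually_all_finset F).2 meets_circle).and (eventually_gt_atTop R)).exists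
  have meets_at_angle : ∀ γ ∈ F, ∃ s ∈ Set.Ioo (θ - ε) (θ + ε), (r * cos s, r * sin s) ∈ γ :=
    fun γ hγ => by
      obtain ⟨z, hz, rfl⟩ := hmeets γ hγ
      obtain ⟨s, hs, hzs⟩ := exists_polar_angle_of_mem_openSector hε.1.le
        (subset_openSector_of_mem_endsAlong hε hleft hright (hF hγ) hz)
      exact ⟨s, hs, hzs ▸ hz⟩
  choose! angle angle_mem mem_angle using meets_at_angle
  rw [← Set.encard_coe_eq_coe_finsetCard]
  refine (Set.encard_le_encard_of_injOn (f := angle) (fun γ hγ => ?_)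
    (fun γ hγ δ hδ hγδ => ?_)).trans (hzeros r hr)
  · exact ⟨angle_mem γ hγ, (subset_tangencyFar_of_mem_endsAlong (hF hγ) (mem_angle γ hγ)).1⟩
  · rw [eq_connectedComponentIn_of_mem_endsAlong (hF hγ) (mem_angle γ hγ), hγδ,
      ← eq_connectedComponentIn_of_mem_endsAlong (hF hδ) (mem_angle δ hδ)]

theorem exists_sector_forall_large_circle {p : MvPolynomial (Fin 2) ℝ} {d n : ℕ}
    (hp : p.totalDegree ≤ d) {θ : ℝ}
    (hθ : evalP ((rotationDerivation ℝ)^[n] (homogeneousComponent d p)) (cos θ) (sin θ) ≠ 0) :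
    ∃ ε ∈ Set.Ioo 0 π, ∀ᶠ r in atTop,
      evalP p (r * cos (θ - ε)) (r * sin (θ - ε)) ≠ 0 ∧
      evalP p (r * cos (θ + ε)) (r * sin (θ + ε)) ≠ 0 ∧
      {s ∈ Set.Ioo (θ - ε) (θ + ε) | evalP p (r * cos s) (r * sin s) = 0}.encard ≤ n := by
  have near_infinity := eventually_evalP_circle_ne_zero
    ((totalDegree_iterate_rotationDerivation_le p n).trans hp)
    (by rwa [homogeneousComponent_iterate_rotationDerivation])
  obtain ⟨large, hlarge, near, hnear, hiterate⟩ := eventually_prod_iff.1 near_infinity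
  obtain ⟨δ, hδ, hball⟩ := Metric.eventually_nhds_iff_ball.1 hnear
  have top_ne_zero := eventually_nhdsNE_evalP_cos_sin_ne_zero hθ
  have tendsto_left : Tendsto (fun ε => θ - ε) (𝓝[>] 0) (𝓝[≠] θ) := by
    simpa using (continuous_sub_left θ).continuousWithinAt.tendsto_nhdsWithin (x := 0)
      (t := {θ}ᶜ) (s := Set.Ioi 0) fun ε (hε : 0 < ε) => by simpa using hε.ne'
  have tendsto_right : Tendsto (fun ε => θ + ε) (𝓝[>] 0) (𝓝[≠] θ) := by
    simpa using (continuous_const_add θ).continuousWithinAt.tendsto_nhdsWithin (x := 0)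
      (t := {θ}ᶜ) (s := Set.Ioi 0) fun ε (hε : 0 < ε) => by simpa using hε.ne'
  obtain ⟨ε, ⟨hεδ, hε⟩, hleft, hright⟩ := ((eventually_mem_set.2
    (inter_mem (Ioo_mem_nhdsGT hδ) (Ioo_mem_nhdsGT pi_pos))).and
      ((tendsto_left.eventually top_ne_zero).and (tendsto_right.eventually top_ne_zero))).exists
  have ray {s : ℝ} (hs : evalP (homogeneousComponent d p) (cos s) (sin s) ≠ 0) :
      ∀ᶠ r in atTop, evalP p (r * cos s) (r * sin s) ≠ 0 :=
    (tendsto_id.prodMk tendsto_const_nhds).eventually (eventually_evalP_circle_ne_zero hp hs)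
  refine ⟨ε, hε, ?_⟩
  filter_upwards [ray hleft, ray hright, hlarge] with r hrleft hrright hr
  refine ⟨hrleft, hrright, encard_circle_zeros_le Set.ordConnected_Ioo fun s hs => ?_⟩
  refine hiterate hr (hball s ?_)
  rw [Real.ball_eq_Ioo]
  exact Set.Ioo_subset_Ioo (by linarith [hεδ.2]) (by linarith [hεδ.2]) hs

theorem eventually_encard_endsAlong_le {f : MvPolynomial (Fin 2) ℝ} {d n : ℕ}
    (hf : f.totalDegree ≤ d) {θ : ℝ}
    (hθ : evalP ((rotationDerivation ℝ)^[n + 1] (homogeneousComponent d f))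
      (cos θ) (sin θ) ≠ 0) :
    ∀ᶠ R in atTop, (endsAlong f R θ).encard ≤ n := by
  rw [Function.iterate_succ_apply, ← homogeneousComponent_rotationDerivation,
    ← tangencyPoly_eq_rotationDerivation] at hθ
  obtain ⟨ε, hε, hlarge⟩ := exists_sector_forall_large_circle
    ((totalDegree_rotationDerivation_le f).trans hf) hθ
  filter_upwards [eventually_forall_ge_atTop.2 hlarge] with R hR
  exact encard_endsAlong_le hε (fun r hr => (hR r hr.le).1) (fun r hr => (hR r hr.le).2.1)
    fun r hr => (hR r hr.le).2.2

theorem eventually_encard_endsToward_le {f : MvPolynomial (Fin 2) ℝ} {d n : ℕ}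
    (hf : f.totalDegree ≤ d) {a b : ℝ} (hab : (a, b) ≠ ((0 : ℝ), (0 : ℝ)))
    (hne : evalP ((rotationDerivation ℝ)^[n + 1] (homogeneousComponent d f)) a b ≠ 0) :
    ∀ᶠ R in atTop, (endsToward f R a b).encard ≤ 2 * n := by
  obtain ⟨θ, N, ha, hb⟩ : ∃ θ N, a = N * cos θ ∧ b = N * sin θ := by
    obtain ⟨θ, -, hθ⟩ := exists_polar_angle (a, b) 0
    exact ⟨θ, _, congrArg Prod.fst hθ, congrArg Prod.snd hθ⟩
  have hN : N ≠ 0 := by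
    rintro rfl
    simp [ha, hb] at hab
  have ray {c φ : ℝ} (hcos : a = c * cos φ) (hsin : b = c * sin φ) :
      ∀ᶠ R in atTop, (endsAlong f R φ).encard ≤ n := by
    rw [hcos, hsin] at hne
    exact eventually_encard_endsAlong_le hf (evalP_ne_zero_of_evalP_mul_ne_zero
      (isHomogeneous_iterate_rotationDerivation (homogeneousComponent_isHomogeneous d f) _) hne)
  filter_upwards [ray ha hb, ray (c := -N) (φ := θ + π) (by simpa using ha) (by simpa using hb)]
    with R hforward hbackward
  calc (endsToward f R a b).encard
      ≤ (endsAlong f R θ ∪ endsAlong f R (θ + π)).encard := by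
        rw [ha, hb]
        exact Set.encard_le_encard (endsToward_subset f R θ hN)
    _ ≤ (endsAlong f R θ).encard + (endsAlong f R (θ + π)).encard := Set.encard_union_le _ _
    _ ≤ n + n := add_le_add hforward hbackward
    _ = 2 * n := (two_mul _).symm

end Ends

theorem ends_toward_point_le_two_mul_mult_sub_one_general
    (f : MvPolynomial (Fin 2) ℝ) (d : ℕ) (hd : f.totalDegree = d)
    (a b : ℝ) (hab : (a, b) ≠ ((0 : ℝ), (0 : ℝ)))
    (m : ℕ) (hm : 1 ≤ m)
    (hdvd : (C b * X 0 - C a * X 1) ^ m ∣ homogeneousComponent d f)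
    (hndvd : ¬ (C b * X 0 - C a * X 1) ^ (m + 1) ∣ homogeneousComponent d f) :
    ∃ R₀ : ℝ, 0 < R₀ ∧ ∀ R : ℝ, R₀ ≤ R →
      (endsToward f R a b).Finite ∧ (endsToward f R a b).ncard ≤ 2 * (m - 1) := by
  obtain ⟨n, rfl⟩ := Nat.exists_eq_add_of_le' hm
  have hab_sq : a ^ 2 + b ^ 2 ≠ 0 := by
    simpa [add_eq_zero_iff_of_nonneg (sq_nonneg a) (sq_nonneg b)] using hab
  have hne : evalP ((rotationDerivation ℝ)^[n + 1] (homogeneousComponent d f)) a b ≠ 0 :=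
    eval_iterate_rotationDerivation_ne_zero (homogeneousComponent_isHomogeneous d f) hab_sq
      hdvd hndvd
  obtain ⟨R₁, hR₁⟩ := eventually_atTop.1 (eventually_encard_endsToward_le hd.le hab hne)
  refine ⟨max R₁ 1, by positivity, fun R hR => ?_⟩
  exact Set.encard_le_coe_iff_finite_ncard_le.1 (mod_cast hR₁ R (le_of_max_le_left hR))

theorem ends_toward_point_le_two_mul_mult_sub_one
    (f : MvPolynomial (Fin 2) ℝ) (d : ℕ) (hd : f.totalDegree = d)
    (hfin : {p : ℝ × ℝ | IsCriticalPt f p}.Finite)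
    (hT : tangencyPoly f ≠ 0)
    (a b : ℝ) (hab : (a, b) ≠ ((0 : ℝ), (0 : ℝ)))
    (m : ℕ) (hm : 1 ≤ m)
    (hdvd : (C b * X 0 - C a * X 1) ^ m ∣ homogeneousComponent d f)
    (hndvd : ¬ (C b * X 0 - C a * X 1) ^ (m + 1) ∣ homogeneousComponent d f) :
    ∃ R₀ : ℝ, 0 < R₀ ∧ ∀ R : ℝ, R₀ ≤ R →
      (endsToward f R a b).Finite ∧ (endsToward f R a b).ncard ≤ 2 * (m - 1) :=
  ends_toward_point_le_two_mul_mult_sub_one_general f d hd a b hab m hm hdvd hndvd
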